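/- Let M_1 and M_2 be commuting n×n integer matrices. Then the torsion subgroup of the quotient ker((1-M_1^t, 1-M_2^t)) / im((M_2^t - 1; 1-M_1^t)) is isomorphic to the torsion subgroup of coker((1-M_1, 1-M_2) : Z^n ⊕ Z^n → Z^n). -/

import Mathlib

/-!
Write `B = (M₂ᵀ - 1; 1 - M₁ᵀ)` and `A = (M₂ - 1, 1 - M₁)`, so that `B` is the transpose of `A`,
and `A` has the same range as `(1 - M₁, 1 - M₂)`.

* `ℤⁿ ⊕ ℤⁿ` modulo the kernel of any map to `ℤⁿ` is torsion-free, so a torsion class of `coker B`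
  is represented by an element of the kernel: `ker / im B` and `coker B` have the same torsion.
* The cokernels of `A` and of its dual have isomorphic torsion (`torsion_coker_dualMap`). Smith
  normal form for `range A` gives a basis `(bᵢ)` of the codomain and scalars `aᵢ` such that the
  `aᵢ bᵢ`, for `i` in a subset, form a basis of `range A`. Both torsion modules are then that of
  `⨁ R / aᵢ`.

All comparisons go through `torsion_equiv_of_comap`: a map `B / p → C / q` that is injective
and whose image contains all torsion induces an isomorphism on torsion.
-/

open Matrix

/-- If `p` is the preimage of `q` under `j` and the saturation of `q` lies in the range of `j`,
then `j` induces an isomorphism between the torsion submodules of the quotients. -/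
lemma torsion_equiv_of_comap {R B C : Type*} [CommRing R] [IsDomain R] [AddCommGroup B]
    [AddCommGroup C] [Module R B] [Module R C] (j : B →ₗ[R] C) (p : Submodule R B)
    (q : Submodule R C) (hp : p = q.comap j)
    (hs : ∀ (k : R) (c : C), k ≠ 0 → k • c ∈ q → ∃ b, j b = c) :
    Nonempty (Submodule.torsion R (B ⧸ p) ≃ₗ[R] Submodule.torsion R (C ⧸ q)) := by
  have hinj : Function.Injective (p.mapQ q j hp.le) := by
    rw [injective_iff_map_eq_zero]
    intro x hx
    obtain ⟨b, rfl⟩ := p.mkQ_surjective x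
    simp only [Submodule.mkQ_apply, Submodule.mapQ_apply, Submodule.Quotient.mk_eq_zero] at hx ⊢
    rw [hp]
    exact hx
  have hmem : ∀ x ∈ Submodule.torsion R (B ⧸ p),
      p.mapQ q j hp.le x ∈ Submodule.torsion R (C ⧸ q) := by
    intro x hx
    rw [Submodule.mem_torsion_iff] at hx ⊢
    obtain ⟨a, ha⟩ := hx
    refine ⟨a, ?_⟩
    rw [Submonoid.smul_def] at ha ⊢
    rw [← map_smul, ha, map_zero]
  refine ⟨LinearEquiv.ofBijective ((p.mapQ q j hp.le).restrict hmem) ⟨?_, ?_⟩⟩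
  · intro x y hxy
    exact Subtype.ext (hinj (congrArg Subtype.val hxy))
  · rintro ⟨y, hy⟩
    obtain ⟨c, rfl⟩ := q.mkQ_surjective y
    obtain ⟨a, ha⟩ := (Submodule.mem_torsion_iff _).1 hy
    have hac : (a : R) • c ∈ q := by
      rw [← Submodule.Quotient.mk_eq_zero]
      exact ha
    obtain ⟨b, rfl⟩ := hs a c (nonZeroDivisors.ne_zero a.2) hac
    refine ⟨⟨p.mkQ b, (Submodule.mem_torsion_iff _).2 ⟨a, ?_⟩⟩, Subtype.ext rfl⟩
    rw [Submonoid.smul_def, ← map_smul, Submodule.mkQ_apply, Submodule.Quotient.mk_eq_zero, hp,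
      Submodule.mem_comap, map_smul]
    exact hac

/-- The torsion of the cokernel of a linear map to a finite free module over a PID is isomorphic
to the torsion of the cokernel of its dual. -/
lemma torsion_coker_dualMap {R E F : Type*} [CommRing R] [IsDomain R] [IsPrincipalIdealRing R]
    [AddCommGroup E] [AddCommGroup F] [Module R E] [Module R F] [Module.Free R F]
    [Module.Finite R F] (A : E →ₗ[R] F) :
    Nonempty (Submodule.torsion R (Module.Dual R E ⧸ LinearMap.range A.dualMap) ≃ₗ[R]
      Submodule.torsion R (F ⧸ LinearMap.range A)) := by
  obtain ⟨r, bM, bN, f, a, hab⟩ :=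
    Submodule.smithNormalForm (Module.Free.chooseBasis R F) (LinearMap.range A)
  have hrange : ∀ y (hy : y ∈ LinearMap.range A), y = ∑ i, (bN.repr ⟨y, hy⟩ i * a i) • bM (f i) := by
    intro y hy
    have := congrArg Subtype.val (bN.sum_repr ⟨y, hy⟩)
    simp only [Submodule.coe_sum, Submodule.coe_smul, hab, smul_smul] at this
    exact this.symm
  have hA : ∀ v, A v = ∑ i, (bN.repr (A.rangeRestrict v) i * a i) • bM (f i) :=
    fun v => hrange (A v) ⟨v, rfl⟩
  choose s hs using fun i => A.surjective_rangeRestrict (bN i)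
  -- The common model of both cokernels, up to a torsion-free part, is `⨁ R / aᵢ`.
  let q0 : Submodule R (Fin r → R) := Submodule.pi Set.univ fun i => Ideal.span {a i}
  have hq0 : ∀ x, x ∈ q0 ↔ ∀ i, a i ∣ x i := by
    intro x
    simp [q0, Submodule.mem_pi, Ideal.mem_span_singleton]
  let j : (Fin r → R) →ₗ[R] F := Fintype.linearCombination R fun i => bM (f i)
  have hj : ∀ x, j x = ∑ i, x i • bM (f i) := fun x => rfl
  have hjc : ∀ x i, bM.repr (j x) (f i) = x i := by
    intro x i
    simp [hj, Finsupp.single_apply, f.injective.eq_iff]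
  have hj_mem : ∀ y, y ∈ LinearMap.range A ↔ ∃ x ∈ q0, j x = y := by
    intro y
    constructor
    · intro hy
      exact ⟨_, (hq0 _).2 fun i => Dvd.intro_left _ rfl, (hrange y hy).symm⟩
    · rintro ⟨x, hx, rfl⟩
      rw [hj]
      refine Submodule.sum_mem _ fun i _ => ?_
      obtain ⟨c, hc⟩ := (hq0 x).1 hx i
      rw [hc, mul_comm, mul_smul, ← hab]
      exact Submodule.smul_mem _ _ (bN i).2
  obtain ⟨e⟩ := torsion_equiv_of_comap j q0 (LinearMap.range A)
    (by
      ext x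
      rw [Submodule.mem_comap, hj_mem]
      constructor
      · exact fun hx => ⟨x, hx, rfl⟩
      · rintro ⟨x', hx', h⟩
        have : x' = x := by
          funext i
          rw [← hjc x' i, h, hjc]
        exact this ▸ hx')
    (by
      intro k c hk hc
      obtain ⟨x, -, hx⟩ := (hj_mem _).1 hc
      refine ⟨fun i => bM.repr c (f i), bM.ext_elem fun l => ?_⟩
      by_cases hl : ∃ i, f i = l
      · obtain ⟨i, rfl⟩ := hl
        rw [hjc]
      · have h0 : ∀ x, bM.repr (j x) l = 0 := by
          intro x
          simp only [not_exists] at hl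
          simp [hj, hl]
        have h1 := h0 x
        rw [hx, map_smul, Finsupp.smul_apply, smul_eq_mul] at h1
        rw [h0, (mul_eq_zero.1 h1).resolve_left hk])
  -- The `i`-th functional reads off the `i`-th coordinate of `A v` in the basis of the range.
  let j' : (Fin r → R) →ₗ[R] Module.Dual R E :=
    Fintype.linearCombination R fun i => (bN.coord i).comp A.rangeRestrict
  have hj' : ∀ x v, j' x v = ∑ i, x i * bN.repr (A.rangeRestrict v) i := by
    intro x v
    simp [j', Fintype.linearCombination_apply]
  have hj's : ∀ x i, j' x (s i) = x i := by
    intro x i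
    simp [hj', hs, Finsupp.single_apply]
  have hdual : ∀ φ : Module.Dual R F, A.dualMap φ = j' fun i => a i * φ (bM (f i)) := by
    intro φ
    ext v
    rw [LinearMap.dualMap_apply, hA, hj', map_sum]
    refine Finset.sum_congr rfl fun i _ => ?_
    rw [map_smul, smul_eq_mul]
    ring
  obtain ⟨e'⟩ := torsion_equiv_of_comap j' q0 (LinearMap.range A.dualMap)
    (by
      ext x
      rw [Submodule.mem_comap, hq0, LinearMap.mem_range]
      constructor
      · intro hx
        choose c hc using hx
        refine ⟨∑ i, c i • bM.coord (f i), ?_⟩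
        rw [hdual]
        congr 1
        funext i
        simp [hc, Finsupp.single_apply, f.injective.eq_iff]
      · rintro ⟨φ, hφ⟩ i
        rw [hdual] at hφ
        rw [← hj's x i, ← hφ, hj's]
        exact Dvd.intro _ rfl)
    (by
      rintro k c hk ⟨φ, hφ⟩
      -- A multiple of `c` vanishes on `ker A`, hence so does `c`.
      have hker : ∀ v, A v = 0 → c v = 0 := by
        intro v hv
        have h1 := LinearMap.congr_fun hφ v
        rw [LinearMap.dualMap_apply, hv, map_zero, LinearMap.smul_apply, smul_eq_mul] at h1
        exact (mul_eq_zero.1 h1.symm).resolve_left hk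
      refine ⟨fun i => c (s i), ?_⟩
      ext v
      have h2 : A.rangeRestrict (v - ∑ i, bN.repr (A.rangeRestrict v) i • s i) = 0 := by
        simp only [map_sub, map_sum, map_smul, hs, bN.sum_repr, sub_self]
      have h3 := hker _ (congrArg Subtype.val h2)
      rw [map_sub, sub_eq_zero] at h3
      rw [h3, hj', map_sum]
      refine Finset.sum_congr rfl fun i _ => ?_
      rw [map_smul, smul_eq_mul, mul_comm])
  exact ⟨e'.symm.trans e⟩

/-- For commuting `n×n` integer matrices `M₁, M₂`, the torsion subgroup of
`ker((1-M₁ᵀ, 1-M₂ᵀ)) / im((M₂ᵀ-1; 1-M₁ᵀ))` is isomorphic to the torsion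
subgroup of `coker((1-M₁, 1-M₂) : ℤⁿ ⊕ ℤⁿ → ℤⁿ)`. -/
theorem twograph_K1_torsion (n : ℕ) (M1 M2 : Matrix (Fin n) (Fin n) ℤ)
    (h : M1 * M2 = M2 * M1) :
    Nonempty
      ((Submodule.torsion ℤ
          (↥(LinearMap.ker
              (LinearMap.coprod (1 - M1ᵀ).mulVecLin (1 - M2ᵀ).mulVecLin)) ⧸
            (LinearMap.range
                (LinearMap.prod (M2ᵀ - 1).mulVecLin (1 - M1ᵀ).mulVecLin)).comap
              (LinearMap.ker
                (LinearMap.coprod (1 - M1ᵀ).mulVecLin (1 - M2ᵀ).mulVecLin)).subtype))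
        ≃+
       Submodule.torsion ℤ
          ((Fin n → ℤ) ⧸ LinearMap.range
            (LinearMap.coprod (1 - M1).mulVecLin (1 - M2).mulVecLin))) := by
  set K := LinearMap.coprod (1 - M1ᵀ).mulVecLin (1 - M2ᵀ).mulVecLin with hK
  set B := LinearMap.prod (M2ᵀ - 1).mulVecLin (1 - M1ᵀ).mulVecLin with hB
  let A : (Fin n → ℤ) × (Fin n → ℤ) →ₗ[ℤ] (Fin n → ℤ) :=
    LinearMap.coprod (M2 - 1).mulVecLin (1 - M1).mulVecLin
  have hKB : ∀ y, K (B y) = 0 := by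
    intro y
    have ht : M1ᵀ * M2ᵀ = M2ᵀ * M1ᵀ := by
      rw [← transpose_mul, ← transpose_mul, h]
    have h0 : (1 - M1ᵀ) * (M2ᵀ - 1) + (1 - M2ᵀ) * (1 - M1ᵀ) = 0 := by
      simp only [sub_mul, mul_sub, ht, one_mul, mul_one]
      abel
    change (1 - M1ᵀ) *ᵥ ((M2ᵀ - 1) *ᵥ y) + (1 - M2ᵀ) *ᵥ ((1 - M1ᵀ) *ᵥ y) = 0
    rw [mulVec_mulVec, mulVec_mulVec, ← add_mulVec, h0, zero_mulVec]
  have hrange : LinearMap.range (LinearMap.coprod (1 - M1).mulVecLin (1 - M2).mulVecLin) =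
      LinearMap.range A := by
    have hneg : (M2 - 1).mulVecLin = -(1 - M2).mulVecLin := by
      ext1
      simp
    simp only [A, LinearMap.range_coprod]
    rw [hneg, LinearMap.range_neg, sup_comm]
  obtain ⟨e₁⟩ := torsion_equiv_of_comap (LinearMap.ker K).subtype _ (LinearMap.range B) rfl
    (by
      rintro k c hk ⟨y, hy⟩
      have h1 := hKB y
      rw [hy, map_smul] at h1
      exact ⟨⟨c, (smul_eq_zero.1 h1).resolve_left hk⟩, rfl⟩)
  let d := dotProductEquiv ℤ (Fin n)
  let D := (d.prodCongr d).trans (Module.dualProdDualEquivDual ℤ (Fin n → ℤ) (Fin n → ℤ))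
  have hD : ∀ y, D (B y) = A.dualMap (d y) := by
    intro y
    refine LinearMap.ext fun v => ?_
    have h1 : D (B y) v = (M2ᵀ - 1) *ᵥ y ⬝ᵥ v.1 + (1 - M1ᵀ) *ᵥ y ⬝ᵥ v.2 := rfl
    have h2 : A.dualMap (d y) v = y ⬝ᵥ ((M2 - 1) *ᵥ v.1 + (1 - M1) *ᵥ v.2) := rfl
    have h3 : M2ᵀ - 1 = (M2 - 1)ᵀ := by simp
    have h4 : 1 - M1ᵀ = (1 - M1)ᵀ := by simp
    rw [h1, h2, h3, h4, mulVec_transpose, mulVec_transpose, dotProduct_add, dotProduct_mulVec,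
      dotProduct_mulVec]
  obtain ⟨e₂⟩ := torsion_equiv_of_comap D.toLinearMap (LinearMap.range B)
    (LinearMap.range A.dualMap)
    (by
      ext c
      constructor
      · rintro ⟨y, rfl⟩
        exact ⟨d y, (hD y).symm⟩
      · rintro ⟨φ, hφ⟩
        obtain ⟨y, rfl⟩ := d.surjective φ
        exact ⟨y, D.injective ((hD y).trans hφ)⟩)
    (fun _ c _ _ => D.surjective c)
  obtain ⟨e₃⟩ := torsion_coker_dualMap A
  rw [hrange]
  exact ⟨((e₁.trans e₂).trans e₃).toAddEquiv⟩
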